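/- Let f : ℝ³ → ℝ be a smooth function such that Zf is bounded (i.e. sup_{p∈ℝ³} |Zf(p)| < ∞) and f ∘ γ = f. Then Xf = 0 identically. -/

import Mathlib

/-- The flow `φ_s(x,y,t) = (x + s·λᵗ, y + a·s·λᵗ, t)` on `ℝ³`. -/
noncomputable def phi (lam a : ℝ) (s : ℝ) (p : ℝ × ℝ × ℝ) : ℝ × ℝ × ℝ :=
  (p.1 + s * lam ^ p.2.2, p.2.1 + a * s * lam ^ p.2.2, p.2.2)

/-- The vector field `X = λᵗ(∂/∂x + a ∂/∂y)` acting on functions. -/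
noncomputable def Xop (lam a : ℝ) (f : ℝ × ℝ × ℝ → ℝ) (p : ℝ × ℝ × ℝ) : ℝ :=
  lam ^ p.2.2 * (deriv (fun x => f (x, p.2.1, p.2.2)) p.1
    + a * deriv (fun y => f (p.1, y, p.2.2)) p.2.1)

/-- The vector field `Z = -(log λ)⁻¹ ∂/∂t` acting on functions. -/
noncomputable def Zop (lam : ℝ) (f : ℝ × ℝ × ℝ → ℝ) (p : ℝ × ℝ × ℝ) : ℝ :=
  -(Real.log lam)⁻¹ * deriv (fun t => f (p.1, p.2.1, t)) p.2.2

/-! A bound on `Zf` makes `f` Lipschitz in `t`, uniformly in `(x, y)`, and invariance under `γ` says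
that the slice of `f` at time `t` has period `λᵗ(1, a)`. If `λ ^ tₙ = λᵗ + w / n`, then `n` periods
of the slice at time `tₙ` exceed `n` periods of the slice at time `t` by the fixed vector `w(1, a)`,
while the two slices converge uniformly to each other as `n → ∞`. Hence every multiple of `(1, a)`
is a period, so `f` is invariant under the whole flow of `X`. -/

open Filter Function Topology Uniformity

section UniformLimits

variable {E F : Type*} [UniformSpace F] [T2Space F]

theorem periodic_of_tendstoUniformly [AddMonoid E] {ι : Type*} {l : Filter ι} [NeBot l]
    {g : ι → E → F} {g₀ : E → F} {c : ι → E} {c₀ w : E} {n : ι → ℕ}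
    (hlim : TendstoUniformly g g₀ l) (hg : ∀ᶠ i in l, Periodic (g i) (c i))
    (hg₀ : Periodic g₀ c₀) (hw : ∀ᶠ i in l, w + n i • c₀ = n i • c i) :
    Periodic g₀ w := by
  intro x
  have hfar : Tendsto (fun i => g i (x + n i • c i)) l (𝓝 (g₀ (x + w))) := by
    have hunif : Tendsto (fun i => (g₀ (x + n i • c i), g i (x + n i • c i))) l (𝓤 F) :=
      (tendstoUniformly_iff_tendsto.1 hlim).comp (tendsto_id.prodMk tendsto_top)
    refine Uniform.tendsto_nhds_right.2 (hunif.congr' ?_)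
    filter_upwards [hw] with i hi
    rw [← hi, ← add_assoc, hg₀.nsmul (n i) (x + w)]
  have hnear : Tendsto (fun i => g i (x + n i • c i)) l (𝓝 (g₀ x)) := by
    refine (hlim.tendsto_at x).congr' ?_
    filter_upwards [hg] with i hi
    exact (hi.nsmul (n i) x).symm
  exact tendsto_nhds_unique hfar hnear

variable [AddCommMonoid E] [Module ℝ E] {f : E → ℝ → F} {v : E} {t : ℝ}

theorem periodic_smul_of_eventually_periodic_smul {c : ℝ} (hf : EquicontinuousAt f c)
    (hper : ∀ᶠ r in 𝓝 c, Periodic (f · r) (r • v)) (w : ℝ) :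
    Periodic (f · c) (w • v) := by
  have hc : Tendsto (fun n : ℕ => c + w / n) atTop (𝓝 c) := by
    simpa only [add_zero] using (tendsto_const_div_atTop_nhds_zero_nat w).const_add c
  have hlim : TendstoUniformly (fun n : ℕ => (f · (c + w / n))) (f · c) atTop :=
    fun U hU => hc.eventually (hf U hU)
  refine periodic_of_tendstoUniformly (n := id) hlim (hc.eventually hper) hper.self_of_nhds ?_
  filter_upwards [eventually_ne_atTop 0] with n hn
  have hn' : (n : ℝ) ≠ 0 := Nat.cast_ne_zero.2 hn
  rw [id, ← Nat.cast_smul_eq_nsmul ℝ n, ← Nat.cast_smul_eq_nsmul ℝ n, smul_smul, smul_smul,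
    ← add_smul, mul_add, mul_div_cancel₀ w hn', add_comm]

theorem periodic_smul_of_periodic_rpow_smul {b : ℝ} (hb₀ : 0 < b) (hb₁ : b ≠ 1)
    (hf : EquicontinuousAt f t) (hper : ∀ s, Periodic (f · s) (b ^ s • v)) (w : ℝ) :
    Periodic (f · t) (w • v) := by
  have hpos : 0 < b ^ t := Real.rpow_pos_of_pos hb₀ t
  have ht : Real.logb b (b ^ t) = t := Real.logb_rpow hb₀ hb₁
  -- With the speed `r = b ^ s` as time parameter, the slice at time `r` has period `r • v`.
  have hf' : EquicontinuousAt (fun x r => f x (Real.logb b r)) (b ^ t) := by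
    have hlog : Tendsto (Real.logb b) (𝓝 (b ^ t)) (𝓝 t) := by
      simpa only [ht] using (Real.continuousAt_logb (b := b) hpos.ne').tendsto
    intro U hU
    simpa only [ht] using hlog.eventually (hf U hU)
  have hper' : ∀ᶠ r in 𝓝 (b ^ t), Periodic (f · (Real.logb b r)) (r • v) := by
    filter_upwards [eventually_gt_nhds hpos] with r hr
    simpa only [Real.rpow_logb hb₀ hb₁ hr] using hper (Real.logb b r)
  simpa only [ht] using periodic_smul_of_eventually_periodic_smul hf' hper' w

end UniformLimits

theorem equicontinuous_of_norm_deriv_le {ι F : Type*} [NormedAddCommGroup F] [NormedSpace ℝ F]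
    {f : ι → ℝ → F} {C : ℝ} (hf : ∀ i, Differentiable ℝ (f i))
    (hC : ∀ i t, ‖deriv (f i) t‖ ≤ C) : Equicontinuous f := by
  have hlip : ∀ i, LipschitzWith C.toNNReal (f i) := fun i =>
    lipschitzWith_of_nnnorm_deriv_le (hf i) fun t => NNReal.le_toNNReal_of_coe_le (hC i t)
  exact (LipschitzWith.uniformEquicontinuous f _ hlip).equicontinuous

section Flow

variable {lam a : ℝ} {f : ℝ × ℝ × ℝ → ℝ}

theorem norm_deriv_le_of_abs_Zop_le {C : ℝ} (hlog : Real.log lam ≠ 0) {p : ℝ × ℝ × ℝ}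
    (hC : |Zop lam f p| ≤ C) :
    ‖deriv (fun t => f (p.1, p.2.1, t)) p.2.2‖ ≤ |Real.log lam| * C := by
  rwa [Zop, abs_mul, abs_neg, abs_inv, inv_mul_le_iff₀ (abs_pos.2 hlog)] at hC

theorem phi_eq_add_smul (s : ℝ) (p : ℝ × ℝ × ℝ) :
    phi lam a s p = p + s • lam ^ p.2.2 • (1, a, 0) := by
  obtain ⟨x, y, t⟩ := p
  simp only [phi, Prod.smul_mk, Prod.mk_add_mk, smul_eq_mul, mul_one, mul_zero, add_zero]
  rw [mul_comm a s, mul_assoc, mul_comm a]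

theorem comp_phi_eq_iff_periodic {s : ℝ} :
    f ∘ phi lam a s = f ↔
      ∀ t, Periodic (fun q : ℝ × ℝ => f (q.1, q.2, t)) ((s * lam ^ t) • (1, a)) := by
  have hphi (x y t : ℝ) :
      phi lam a s (x, y, t) = (x + (s * lam ^ t) * 1, y + (s * lam ^ t) * a, t) := by
    simp only [phi_eq_add_smul, mul_assoc, Prod.smul_mk, Prod.mk_add_mk, smul_eq_mul, mul_zero,
      add_zero]
  constructor
  · rintro h t ⟨x, y⟩
    exact (congrArg f (hphi x y t)).symm.trans (congrFun h (x, y, t))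
  · intro h
    ext ⟨x, y, t⟩
    exact (congrArg f (hphi x y t)).trans (h t (x, y))

theorem comp_phi_eq_of_comp_phi_one_eq (hlam₀ : 0 < lam) (hlam₁ : lam ≠ 1)
    (hf : Equicontinuous fun (q : ℝ × ℝ) t => f (q.1, q.2, t))
    (hinv : f ∘ phi lam a 1 = f) (s : ℝ) : f ∘ phi lam a s = f := by
  have hper (t : ℝ) : Periodic (fun q : ℝ × ℝ => f (q.1, q.2, t)) (lam ^ t • (1, a)) := by
    simpa only [one_mul] using comp_phi_eq_iff_periodic.1 hinv t
  exact comp_phi_eq_iff_periodic.2 fun t =>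
    periodic_smul_of_periodic_rpow_smul hlam₀ hlam₁ (hf t) hper (s * lam ^ t)

theorem Xop_eq_fderiv {p : ℝ × ℝ × ℝ} (hf : DifferentiableAt ℝ f p) :
    Xop lam a f p = fderiv ℝ f p (lam ^ p.2.2 • (1, a, 0)) := by
  have hx : HasDerivAt (fun x => f (x, p.2.1, p.2.2)) (fderiv ℝ f p (1, 0, 0)) p.1 :=
    HasFDerivAt.comp_hasDerivAt p.1 hf.hasFDerivAt
      ((hasDerivAt_id p.1).prodMk (hasDerivAt_const p.1 p.2))
  have hy : HasDerivAt (fun y => f (p.1, y, p.2.2)) (fderiv ℝ f p (0, 1, 0)) p.2.1 :=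
    HasFDerivAt.comp_hasDerivAt p.2.1 hf.hasFDerivAt
      ((hasDerivAt_const p.2.1 p.1).prodMk
        ((hasDerivAt_id p.2.1).prodMk (hasDerivAt_const p.2.1 p.2.2)))
  have hdir : ((1, a, 0) : ℝ × ℝ × ℝ) = (1, 0, 0) + a • (0, 1, 0) := by simp
  rw [Xop, hx.deriv, hy.deriv, hdir, map_smul, map_add, map_smul, smul_eq_mul, smul_eq_mul]

theorem hasDerivAt_comp_phi {p : ℝ × ℝ × ℝ} (hf : DifferentiableAt ℝ f p) :
    HasDerivAt (fun s => f (phi lam a s p)) (Xop lam a f p) 0 := by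
  simp only [phi_eq_add_smul, Xop_eq_fderiv hf]
  exact hf.hasFDerivAt.hasLineDerivAt _

theorem Xop_eq_zero_of_apply_phi_eq {p : ℝ × ℝ × ℝ} (hf : DifferentiableAt ℝ f p)
    (hinv : ∀ s, f (phi lam a s p) = f p) : Xop lam a f p = 0 := by
  have hderiv := hasDerivAt_comp_phi (lam := lam) (a := a) hf
  rw [funext hinv] at hderiv
  exact hderiv.unique (hasDerivAt_const 0 (f p))

end Flow

theorem stmt5_general {lam a : ℝ} (hlam₀ : 0 < lam) (hlam₁ : lam ≠ 1)
    {f : ℝ × ℝ × ℝ → ℝ} (hf : Differentiable ℝ f)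
    (hZ : ∃ C : ℝ, ∀ p : ℝ × ℝ × ℝ, |Zop lam f p| ≤ C)
    (hinv : f ∘ phi lam a 1 = f) (p : ℝ × ℝ × ℝ) : Xop lam a f p = 0 := by
  obtain ⟨C, hC⟩ := hZ
  have hlog : Real.log lam ≠ 0 := Real.log_ne_zero_of_pos_of_ne_one hlam₀ hlam₁
  have hequi : Equicontinuous fun (q : ℝ × ℝ) t => f (q.1, q.2, t) :=
    equicontinuous_of_norm_deriv_le (fun q => by fun_prop)
      fun q t => norm_deriv_le_of_abs_Zop_le hlog (hC (q.1, q.2, t))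
  exact Xop_eq_zero_of_apply_phi_eq (hf p) fun s =>
    congrFun (comp_phi_eq_of_comp_phi_one_eq hlam₀ hlam₁ hequi hinv s) p

/-- Let `f : ℝ³ → ℝ` be smooth with `Zf` bounded and `f ∘ γ = f`,
where `γ = φ₁`. Then `Xf = 0` identically. -/
theorem stmt5 (lam a : ℝ) (hlam : 1 < lam)
    (f : ℝ × ℝ × ℝ → ℝ) (hf : ContDiff ℝ (⊤ : ℕ∞) f)
    (hZ : ∃ C : ℝ, ∀ p : ℝ × ℝ × ℝ, |Zop lam f p| ≤ C)
    (hinv : f ∘ phi lam a 1 = f) :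
    ∀ p : ℝ × ℝ × ℝ, Xop lam a f p = 0 :=
  stmt5_general (one_pos.trans hlam) hlam.ne' (hf.differentiable (by simp)) hZ hinv
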